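/- Let m ≥ 3, let U ⊆ ℝ^m be open, and let (f, ν) be a front on U with values in ℝ^{m+1} all of whose singular points are A₂-points. Suppose K^ext(X, Y)(q) > 0 for every q ∈ U∖Σ and every pair of linearly independent X, Y ∈ ℝ^m. Then for every q ∈ Σ and every pair of I-orthonormal eigenvectors X, Y of the singular shape operator S at q (singular principal directions) with eigenvalues κ_X, κ_Y, the sectional curvature of the singular submanifold Σ (immersed in ℝ^{m+1} by f|_Σ, with the induced metric) at the plane spanned by X and Y equals κ_X·κ_Y and is non-negative; here this sectional curvature is given by the Gauss equation of the immersion f|_Σ as K_Σ(X,Y) = ⟨α(X,X), α(Y,Y)⟩ − ⟨α(X,Y), α(X,Y)⟩, where α(X,Y) denotes the component of the derivative ∂_X(df(Ỹ)) orthogonal to df(T_qΣ) for a vector field Ỹ tangent to Σ extending Y. Furthermore, if there is δ > 0 with K^ext(X, Y)(q) ≥ δ for all q ∈ U∖Σ and all linearly independent X, Y, then these sectional curvatures are strictly positive. -/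

import Mathlib

open scoped Matrix

noncomputable section

/-- Partial derivative of a vector-valued map in the `k`-th coordinate direction. -/
def pd {m N : ℕ} (k : Fin m) (f : (Fin m → ℝ) → (Fin N → ℝ)) :
    (Fin m → ℝ) → (Fin N → ℝ) :=
  fun q => fderiv ℝ f q (Pi.single k 1)

/-- The Jacobian function `λ(q) = det(∂_1 f, …, ∂_m f, ν)` of a frontal `(f, ν)`. -/
def lamb {m : ℕ} (f ν : (Fin m → ℝ) → (Fin (m + 1) → ℝ)) (q : Fin m → ℝ) : ℝ :=
  Matrix.det (Matrix.of (Fin.snoc (fun k : Fin m => pd k f q) (ν q)))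

/-- `p` is an `A₂`-point of the frontal `(f, ν)`: a nondegenerate singular point at which
the null direction is transversal to the singular hypersurface, i.e. `dλ_p(η) ≠ 0` for
(any) nonzero null vector `η`. -/
def IsA2 {m : ℕ} (f ν : (Fin m → ℝ) → (Fin (m + 1) → ℝ)) (p : Fin m → ℝ) : Prop :=
  lamb f ν p = 0 ∧ fderiv ℝ (lamb f ν) p ≠ 0 ∧
  ∀ X : Fin m → ℝ, X ≠ 0 → fderiv ℝ f p X = 0 → fderiv ℝ (lamb f ν) p X ≠ 0

/-- The extrinsic curvature `K^ext(X ∧ Y) = (II(X,X)II(Y,Y) − II(X,Y)²)/(I(X,X)I(Y,Y) − I(X,Y)²)`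
of the plane spanned by `X, Y` at `q`, where `I(X,Y) = ⟨df X, df Y⟩` and
`II(X,Y) = −⟨df X, dν Y⟩`. -/
def Kext {m : ℕ} (f ν : (Fin m → ℝ) → (Fin (m + 1) → ℝ)) (q : Fin m → ℝ)
    (X Y : Fin m → ℝ) : ℝ :=
  ((fderiv ℝ f q X ⬝ᵥ fderiv ℝ ν q X) * (fderiv ℝ f q Y ⬝ᵥ fderiv ℝ ν q Y)
      - (fderiv ℝ f q X ⬝ᵥ fderiv ℝ ν q Y) ^ 2) /
    ((fderiv ℝ f q X ⬝ᵥ fderiv ℝ f q X) * (fderiv ℝ f q Y ⬝ᵥ fderiv ℝ f q Y)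
      - (fderiv ℝ f q X ⬝ᵥ fderiv ℝ f q Y) ^ 2)


/-- `κ` is a singular principal curvature of the front `(f, ν)` at `p` with (singular
principal) eigendirection `X` tangent to the singular hypersurface: there are a smooth unit
conormal field `n` near `p` (orthogonal to `ν` and to the image of the tangent spaces of
the singular hypersurface), a nonzero null vector `η` at `p` and an `I`-orthonormal frame
`c` of the tangent space of the singular hypersurface at `p` such that `(c, η)` is
positively oriented, `(df(c), n, ν)` is positively oriented, and the singular shape
operator equation `D_X n = −sgn(dλ_p(η)) κ · df_p(X)` holds, where
`D_X n = ∂_X n − ⟨∂_X n, ν⟩ν` is the tangential part of `∂_X n`. -/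
def IsSingPrincCurvVec {m : ℕ} (f ν : (Fin m → ℝ) → (Fin (m + 1) → ℝ))
    (p : Fin m → ℝ) (κ : ℝ) (X : Fin m → ℝ) : Prop :=
  X ≠ 0 ∧ fderiv ℝ (lamb f ν) p X = 0 ∧
  ∃ (W : Set (Fin m → ℝ)) (n : (Fin m → ℝ) → (Fin (m + 1) → ℝ))
    (c : Fin m → (Fin m → ℝ)) (η : Fin m → ℝ),
    IsOpen W ∧ p ∈ W ∧ ContDiffOn ℝ (⊤ : ℕ∞) n W ∧
    (∀ q ∈ W, lamb f ν q = 0 →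
      n q ⬝ᵥ n q = 1 ∧ n q ⬝ᵥ ν q = 0 ∧
      ∀ Z : Fin m → ℝ, fderiv ℝ (lamb f ν) q Z = 0 → n q ⬝ᵥ fderiv ℝ f q Z = 0) ∧
    fderiv ℝ f p η = 0 ∧ η ≠ 0 ∧
    (∀ i : Fin m, (i : ℕ) < m - 1 → fderiv ℝ (lamb f ν) p (c i) = 0) ∧
    (∀ i j : Fin m, (i : ℕ) < m - 1 → (j : ℕ) < m - 1 →
      fderiv ℝ f p (c i) ⬝ᵥ fderiv ℝ f p (c j) = (if i = j then (1 : ℝ) else 0)) ∧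
    0 < Matrix.det (Matrix.of fun i : Fin m =>
        if (i : ℕ) < m - 1 then c i else η) ∧
    0 < Matrix.det (Matrix.of fun i : Fin (m + 1) =>
        if h : (i : ℕ) < m - 1 then fderiv ℝ f p (c ⟨(i : ℕ), by omega⟩)
        else if (i : ℕ) = m - 1 then n p else ν p) ∧
    fderiv ℝ n p X - (fderiv ℝ n p X ⬝ᵥ ν p) • ν p
      = (-(Real.sign (fderiv ℝ (lamb f ν) p η)) * κ) • fderiv ℝ f p X

/-- `a` is the component of `v` orthogonal to `df(T_qΣ)`, where `T_qΣ = ker dλ_q`. -/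
def IsNormalPart {m : ℕ} (f ν : (Fin m → ℝ) → (Fin (m + 1) → ℝ)) (q : Fin m → ℝ)
    (v a : Fin (m + 1) → ℝ) : Prop :=
  (∀ Z : Fin m → ℝ, fderiv ℝ (lamb f ν) q Z = 0 → a ⬝ᵥ fderiv ℝ f q Z = 0) ∧
  ∃ Z : Fin m → ℝ, fderiv ℝ (lamb f ν) q Z = 0 ∧ v - a = fderiv ℝ f q Z

/-!
At an `A₂`-point `q` with null direction `η`, the form `II(·, η)` vanishes at `q`, and so does
`I(·, η)`. Nonnegativity of `II(X, X) II(η, η) - II(X, η)²` at `q + t η` for small `t` of both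
signs forces its first-order term `II(X, X) ∂_η II(η, η)` to vanish; the second factor is nonzero
because `q` is an `A₂`-point of a front. Hence `II = 0` on `T_qΣ`. In particular the extrinsic
curvature of planes close to `T_qΣ` tends to zero at `q`, so it has no positive lower bound, and
`α` takes values in the line spanned by the unit conormal `n`, where `α(X, Y) = ⟨d²f(X, Y), n⟩ n`.

Differentiating `II(X, η) = II(η, X)` shows `∂_η II(X, Y) = ⟨dν(η), n⟩ ⟨d²f(X, Y), n⟩` for `X, Y`
tangent to `Σ`. Since `II = 0` on `T_qΣ`, the second-order term of the nonnegative function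
`II(X, X) II(Y, Y) - II(X, Y)²` along `η` is its Gram determinant for `∂_η II`, that is
`⟨dν(η), n⟩²` times the right-hand side of the Gauss equation.

For the product formula, `sgn(dλ(η)) n` is always the conormal `N` with `⟨d²f(η, η), N⟩ > 0`, so
the shape operators defined by different choices of `n` and `η` agree: `⟨α(X, ·), N⟩ = κ_X I(X, ·)`.
-/

open Matrix Filter Topology

section Calculus

variable {E : Type*} [NormedAddCommGroup E] [NormedSpace ℝ E] {ι : Type*} [Fintype ι] {x : E}

lemma tendsto_add_smul_nhdsNE (q v : E) :
    Tendsto (fun t : ℝ => q + t • v) (𝓝[≠] 0) (𝓝 q) := by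
  have hc : Continuous fun t : ℝ => q + t • v := by fun_prop
  simpa using (hc.tendsto 0).mono_left nhdsWithin_le_nhds

lemma contDiffAt_dotProduct {k : WithTop ℕ∞} {u v : E → ι → ℝ} (hu : ContDiffAt ℝ k u x)
    (hv : ContDiffAt ℝ k v x) : ContDiffAt ℝ k (fun y => u y ⬝ᵥ v y) x :=
  ContDiffAt.sum fun i _ => (contDiffAt_pi.1 hu i).mul (contDiffAt_pi.1 hv i)

lemma differentiableAt_dotProduct {u v : E → ι → ℝ} (hu : DifferentiableAt ℝ u x)
    (hv : DifferentiableAt ℝ v x) : DifferentiableAt ℝ (fun y => u y ⬝ᵥ v y) x :=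
  DifferentiableAt.fun_sum fun i _ => (differentiableAt_pi.1 hu i).mul (differentiableAt_pi.1 hv i)

lemma fderiv_dotProduct {u v : E → ι → ℝ} (hu : DifferentiableAt ℝ u x)
    (hv : DifferentiableAt ℝ v x) (Z : E) :
    fderiv ℝ (fun y => u y ⬝ᵥ v y) x Z = fderiv ℝ u x Z ⬝ᵥ v x + u x ⬝ᵥ fderiv ℝ v x Z := by
  have h := (dotProductBilin ℝ ℝ (m := ι)).toContinuousBilinearMap.fderiv_of_bilinear hu hv
  have h' : fderiv ℝ (fun y => u y ⬝ᵥ v y) x = _ := h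
  rw [h', add_comm]
  rfl

lemma fderiv_clm_apply_apply {F G : Type*} [NormedAddCommGroup F] [NormedSpace ℝ F]
    [NormedAddCommGroup G] [NormedSpace ℝ G] {A : E → F →L[ℝ] G} {V : E → F}
    (hA : DifferentiableAt ℝ A x) (hV : DifferentiableAt ℝ V x) (Z : E) :
    fderiv ℝ (fun y => A y (V y)) x Z = fderiv ℝ A x Z (V x) + A x (fderiv ℝ V x Z) := by
  simp [fderiv_clm_apply hA hV, add_comm]

lemma fderiv_eq_zero_of_eq_zero_on_levelSet [CompleteSpace E] {l g : E → ℝ}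
    (hl : ContDiffAt ℝ 1 l x) (hg : ContDiffAt ℝ 1 g x) (hl0 : l x = 0) (hdl : fderiv ℝ l x ≠ 0)
    (h : ∀ᶠ y in 𝓝 x, l y = 0 → g y = 0) {Z : E} (hZ : fderiv ℝ l x Z = 0) :
    fderiv ℝ g x Z = 0 := by
  have hext : IsLocalExtrOn g {y | l y = l x} x := by
    refine .inl (eventually_nhdsWithin_iff.2 ?_)
    filter_upwards [h] with y hy hy'
    rw [h.self_of_nhds hl0, hy (by rwa [← hl0])]
  obtain ⟨a, b, hab, heq⟩ := hext.exists_multipliers_of_hasStrictFDerivAt_1d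
    (hl.hasStrictFDerivAt one_ne_zero) (hg.hasStrictFDerivAt one_ne_zero)
  have hb : b ≠ 0 := by
    rintro rfl
    have ha : a ≠ 0 := fun ha => hab (by simp [ha])
    simp [ha, hdl] at heq
  simpa [hZ, hb] using congrArg (fun L => L Z) heq

end Calculus

section Determinant

variable {E : Type*} [NormedAddCommGroup E] [NormedSpace ℝ E] {ι : Type*} [Fintype ι]
  [DecidableEq ι] {x : E}

lemma contDiffAt_det {k : WithTop ℕ∞} {M : E → Matrix ι ι ℝ}
    (h : ∀ i, ContDiffAt ℝ k (fun y => M y i) x) : ContDiffAt ℝ k (fun y => (M y).det) x := by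
  simp only [det_apply]
  exact ContDiffAt.sum fun σ _ => ContDiffAt.const_smul _ <|
    contDiffAt_prod fun i _ => contDiffAt_pi.1 (h _) i

lemma fderiv_det {M : E → Matrix ι ι ℝ} (h : ∀ i, DifferentiableAt ℝ (fun y => M y i) x) (Z : E) :
    fderiv ℝ (fun y => (M y).det) x Z
      = ∑ i, ((M x).updateRow i (fderiv ℝ (fun y => M y i) x Z)).det := by
  let D : ContinuousMultilinearMap ℝ (fun _ : ι => ι → ℝ) ℝ :=
    { (detRowAlternating (R := ℝ) (n := ι)).toMultilinearMap with
      cont := continuous_id.matrix_det }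
  have hM : HasFDerivAt (fun y i => M y i)
      (ContinuousLinearMap.pi fun i => fderiv ℝ (fun y => M y i) x) x :=
    hasFDerivAt_pi.2 fun i => (h i).hasFDerivAt
  have hD : HasFDerivAt (fun y => (M y).det) _ x := (D.hasFDerivAt (M x)).comp x hM
  rw [hD.fderiv]
  exact D.linearDeriv_apply (M x) _

lemma fderiv_det_of_row_eq_zero {M : E → Matrix ι ι ℝ}
    (h : ∀ i, DifferentiableAt ℝ (fun y => M y i) x) {r : ι} (hr : M x r = 0) (Z : E) :
    fderiv ℝ (fun y => (M y).det) x Z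
      = ((M x).updateRow r (fderiv ℝ (fun y => M y r) x Z)).det := by
  rw [fderiv_det h]
  refine Finset.sum_eq_single r (fun i _ hi => det_eq_zero_of_row_eq_zero r fun j => ?_)
    (absurd (Finset.mem_univ r))
  rw [updateRow_ne hi.symm, hr, Pi.zero_apply]

lemma det_updateRow_eq_dotProduct_mul {R : Type*} [CommRing R] [IsDomain R] (M : Matrix ι ι R)
    {r : ι} {n : ι → R} (hn : n ⬝ᵥ n = 1) (hM : ∀ i ≠ r, M i ⬝ᵥ n = 0) (w : ι → R) :
    (M.updateRow r w).det = (w ⬝ᵥ n) * (M.updateRow r n).det := by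
  have hker : (M.updateRow r (w - (w ⬝ᵥ n) • n)).det = 0 := by
    refine exists_mulVec_eq_zero_iff.1 ⟨n, fun h => by simp [h] at hn, funext fun i => ?_⟩
    change (M.updateRow r (w - (w ⬝ᵥ n) • n)) i ⬝ᵥ n = 0
    by_cases hi : i = r
    · simp [hi, sub_dotProduct, hn]
    · rw [updateRow_ne hi, hM i hi]
  rw [← det_updateRow_smul, ← sub_eq_zero, ← hker, sub_eq_iff_eq_add, ← det_updateRow_add,
    sub_add_cancel]

end Determinant

section Gram

/-- The Gram determinant of the pair `X, Y` for a form `b`; only `b X Y` enters off the diagonal,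
so for a non-symmetric `b` this is not a determinant. -/
def gramDet {V : Type*} (b : V → V → ℝ) (X Y : V) : ℝ :=
  b X X * b Y Y - b X Y ^ 2

lemma gramDet_dotProduct_pos {ι : Type*} [Fintype ι] {u v : ι → ℝ}
    (h : LinearIndependent ℝ ![u, v]) : 0 < gramDet (· ⬝ᵥ ·) u v := by
  have hv : 0 < v ⬝ᵥ v := by simpa using dotProduct_star_self_pos_iff.2 (h.ne_zero 1)
  set w := (v ⬝ᵥ v) • u - (u ⬝ᵥ v) • v
  have hw0 : w ≠ 0 := fun hw => hv.ne' <| (LinearIndependent.pair_iff.1 h (v ⬝ᵥ v) (-(u ⬝ᵥ v)) <| by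
    rw [neg_smul, ← sub_eq_add_neg]; exact hw).1
  have hw : 0 < w ⬝ᵥ w := by simpa using dotProduct_star_self_pos_iff.2 hw0
  have hww : w ⬝ᵥ w = (v ⬝ᵥ v) * gramDet (· ⬝ᵥ ·) u v := by
    simp only [w, gramDet, sub_dotProduct, dotProduct_sub, smul_dotProduct, dotProduct_smul,
      smul_eq_mul, dotProduct_comm v u]
    ring
  exact pos_of_mul_pos_right (hww ▸ hw) hv.le

lemma gramDet_nonneg_of_hasDerivAt {V : Type*} {b : ℝ → V → V → ℝ} {b' : V → V → ℝ} {X Y : V}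
    (hb' : ∀ Z W, HasDerivAt (fun t => b t Z W) (b' Z W) 0)
    (hX : b 0 X X = 0) (hY : b 0 Y Y = 0) (hXY : b 0 X Y = 0)
    (h : ∀ᶠ t in 𝓝[≠] (0 : ℝ), 0 ≤ gramDet (b t) X Y) : 0 ≤ gramDet b' X Y := by
  have lim {Z W : V} (h0 : b 0 Z W = 0) :
      Tendsto (fun t : ℝ => t⁻¹ * b t Z W) (𝓝[≠] 0) (𝓝 (b' Z W)) := by
    simpa [h0] using hasDerivAt_iff_tendsto_slope_zero.1 (hb' Z W)
  refine ge_of_tendsto (((lim hX).mul (lim hY)).sub ((lim hXY).pow 2)) ?_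
  filter_upwards [h] with t ht
  calc 0 ≤ t⁻¹ ^ 2 * gramDet (b t) X Y := by positivity
    _ = t⁻¹ * b t X X * (t⁻¹ * b t Y Y) - (t⁻¹ * b t X Y) ^ 2 := by rw [gramDet]; ring

-- At `t = 0` the nonnegative function `gramDet (b t) X Y` attains its minimum `0`.
lemma mul_eq_zero_of_gramDet_nonneg {V : Type*} {b : ℝ → V → V → ℝ} {b' : V → V → ℝ} {X Y : V}
    (hb' : ∀ Z W, HasDerivAt (fun t => b t Z W) (b' Z W) 0) (hY : b 0 Y Y = 0) (hXY : b 0 X Y = 0)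
    (h : ∀ᶠ t in 𝓝[≠] (0 : ℝ), 0 ≤ gramDet (b t) X Y) : b 0 X X * b' Y Y = 0 := by
  have h0 : gramDet (b 0) X Y = 0 := by simp [gramDet, hY, hXY]
  have hmin : IsLocalMin (fun t => gramDet (b t) X Y) 0 := by
    filter_upwards [eventually_nhdsWithin_iff.1 h] with t ht
    obtain rfl | ht0 := eq_or_ne t 0
    · exact le_rfl
    · simpa only [h0] using ht ht0
  have hd := ((hb' X X).mul (hb' Y Y)).sub ((hb' X Y).pow 2)
  simpa [hY, hXY] using hmin.hasDerivAt_eq_zero hd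

end Gram

section Frontal

variable {E : Type*} [NormedAddCommGroup E] [NormedSpace ℝ E] {ι : Type*} [Fintype ι]
  {f ν : E → ι → ℝ} {q : E}

/-- The first fundamental form `I(X, Y) = ⟨df X, df Y⟩` at `q`. -/
def firstForm (f : E → ι → ℝ) (q X Y : E) : ℝ :=
  fderiv ℝ f q X ⬝ᵥ fderiv ℝ f q Y

/-- The second fundamental form `II(X, Y) = -⟨df X, dν Y⟩` at `q`. -/
def secondForm (f ν : E → ι → ℝ) (q X Y : E) : ℝ :=
  -(fderiv ℝ f q X ⬝ᵥ fderiv ℝ ν q Y)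

/-- The component `⟨d²f(X, Y), N⟩` of the second derivative of `f` at `q` along the vector `N`. -/
def hessianAlong (f : E → ι → ℝ) (N : ι → ℝ) (q X Y : E) : ℝ :=
  fderiv ℝ (fderiv ℝ f) q X Y ⬝ᵥ N

lemma linearIndependent_of_gramDet_firstForm_ne_zero {X Y : E}
    (h : gramDet (firstForm f q) X Y ≠ 0) : LinearIndependent ℝ ![X, Y] := by
  refine LinearIndependent.pair_iff.2 fun s t hst => ?_
  have hdf : s • fderiv ℝ f q X + t • fderiv ℝ f q Y = 0 := by
    simpa using congrArg (fderiv ℝ f q) hst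
  have hIX := congrArg (fderiv ℝ f q X ⬝ᵥ ·) hdf
  have hIY := congrArg (fderiv ℝ f q Y ⬝ᵥ ·) hdf
  simp only [dotProduct_add, dotProduct_smul, dotProduct_zero, smul_eq_mul,
    dotProduct_comm (fderiv ℝ f q Y) (fderiv ℝ f q X)] at hIX hIY
  simp only [gramDet, firstForm] at h
  constructor
  · refine (mul_eq_zero.1 ?_).resolve_right h
    linear_combination (fderiv ℝ f q Y ⬝ᵥ fderiv ℝ f q Y) * hIX
      - (fderiv ℝ f q X ⬝ᵥ fderiv ℝ f q Y) * hIY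
  · refine (mul_eq_zero.1 ?_).resolve_right h
    linear_combination (fderiv ℝ f q X ⬝ᵥ fderiv ℝ f q X) * hIY
      - (fderiv ℝ f q X ⬝ᵥ fderiv ℝ f q Y) * hIX

/-- `(f, ν)` is a frontal near `q`: `ν` is a unit normal field along `f`. Second order
differentiability at `q` is all that the local theory needs. -/
structure IsFrontalAt (f ν : E → ι → ℝ) (q : E) : Prop where
  contDiffAt_map : ContDiffAt ℝ 2 f q
  contDiffAt_normal : ContDiffAt ℝ 2 ν q
  eventually_normal_unit : ∀ᶠ x in 𝓝 q, ν x ⬝ᵥ ν x = 1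
  eventually_tangent_normal : ∀ᶠ x in 𝓝 q, ∀ Z, fderiv ℝ f x Z ⬝ᵥ ν x = 0

/-- The frontal `(f, ν)` is a front at `q`: the map `(f, ν)` is immersive there. -/
structure IsFrontAt (f ν : E → ι → ℝ) (q : E) : Prop extends IsFrontalAt f ν q where
  eq_zero_of_null : ∀ X, fderiv ℝ f q X = 0 → fderiv ℝ ν q X = 0 → X = 0

namespace IsFrontalAt

variable (h : IsFrontalAt f ν q)
include h

lemma eventually_isFrontalAt : ∀ᶠ x in 𝓝 q, IsFrontalAt f ν x := by
  filter_upwards [h.contDiffAt_map.eventually (by simp), h.contDiffAt_normal.eventually (by simp),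
    h.eventually_normal_unit.eventually_nhds, h.eventually_tangent_normal.eventually_nhds]
    with x hf hν hu ht using ⟨hf, hν, hu, ht⟩

lemma normal_unit : ν q ⬝ᵥ ν q = 1 :=
  h.eventually_normal_unit.self_of_nhds

lemma tangent_normal (Z : E) : fderiv ℝ f q Z ⬝ᵥ ν q = 0 :=
  h.eventually_tangent_normal.self_of_nhds Z

lemma differentiableAt_normal : DifferentiableAt ℝ ν q :=
  h.contDiffAt_normal.differentiableAt two_ne_zero

lemma contDiffAt_fderiv_map : ContDiffAt ℝ 1 (fderiv ℝ f) q :=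
  h.contDiffAt_map.fderiv_right (by norm_num)

lemma differentiableAt_fderiv_map : DifferentiableAt ℝ (fderiv ℝ f) q :=
  h.contDiffAt_fderiv_map.differentiableAt one_ne_zero

lemma differentiableAt_fderiv_normal : DifferentiableAt ℝ (fderiv ℝ ν) q :=
  (h.contDiffAt_normal.fderiv_right (m := 1) (by norm_num)).differentiableAt one_ne_zero

lemma fderiv_fderiv_map_comm (X Y : E) :
    fderiv ℝ (fderiv ℝ f) q X Y = fderiv ℝ (fderiv ℝ f) q Y X :=
  (h.contDiffAt_map.isSymmSndFDerivAt (by simp)).eq X Y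

lemma hessianAlong_comm (N : ι → ℝ) (X Y : E) :
    hessianAlong f N q X Y = hessianAlong f N q Y X := by
  rw [hessianAlong, hessianAlong, h.fderiv_fderiv_map_comm]

lemma fderiv_fderiv_normal_comm (X Y : E) :
    fderiv ℝ (fderiv ℝ ν) q X Y = fderiv ℝ (fderiv ℝ ν) q Y X :=
  (h.contDiffAt_normal.isSymmSndFDerivAt (by simp)).eq X Y

lemma fderiv_normal_normal (Z : E) : fderiv ℝ ν q Z ⬝ᵥ ν q = 0 := by
  have hd := fderiv_dotProduct h.differentiableAt_normal h.differentiableAt_normal Z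
  have hconst : (fun x => ν x ⬝ᵥ ν x) =ᶠ[𝓝 q] fun _ => 1 := h.eventually_normal_unit
  rw [hconst.fderiv_eq, fderiv_fun_const, dotProduct_comm (ν q)] at hd
  simp only [Pi.zero_apply, _root_.zero_apply] at hd
  linarith

lemma fderiv_tangentField_normal {V : E → E} (hV : DifferentiableAt ℝ V q) (Z : E) :
    fderiv ℝ (fun x => fderiv ℝ f x (V x)) q Z ⬝ᵥ ν q = secondForm f ν q (V q) Z := by
  have hd := fderiv_dotProduct (h.differentiableAt_fderiv_map.clm_apply hV)
    h.differentiableAt_normal Z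
  have hconst : (fun x => fderiv ℝ f x (V x) ⬝ᵥ ν x) =ᶠ[𝓝 q] fun _ => 0 := by
    filter_upwards [h.eventually_tangent_normal] with x hx using hx _
  rw [hconst.fderiv_eq, fderiv_fun_const] at hd
  exact eq_neg_of_add_eq_zero_left hd.symm

lemma secondForm_eq_hessianAlong (X Y : E) :
    secondForm f ν q X Y = hessianAlong f (ν q) q Y X := by
  rw [← h.fderiv_tangentField_normal (differentiableAt_const X),
    fderiv_clm_apply_apply h.differentiableAt_fderiv_map (differentiableAt_const X)]
  simp [hessianAlong]

lemma secondForm_comm (X Y : E) : secondForm f ν q X Y = secondForm f ν q Y X := by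
  rw [h.secondForm_eq_hessianAlong, h.secondForm_eq_hessianAlong, h.hessianAlong_comm]

lemma secondForm_null {η : E} (hη : fderiv ℝ f q η = 0) (X : E) : secondForm f ν q X η = 0 := by
  rw [h.secondForm_comm, secondForm, hη, zero_dotProduct, neg_zero]

lemma differentiableAt_firstForm (X Y : E) :
    DifferentiableAt ℝ (fun x => firstForm f x X Y) q :=
  differentiableAt_dotProduct
    (h.differentiableAt_fderiv_map.clm_apply (differentiableAt_const X))
    (h.differentiableAt_fderiv_map.clm_apply (differentiableAt_const Y))

lemma differentiableAt_secondForm (X Y : E) :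
    DifferentiableAt ℝ (fun x => secondForm f ν x X Y) q :=
  (differentiableAt_dotProduct
    (h.differentiableAt_fderiv_map.clm_apply (differentiableAt_const X))
    (h.differentiableAt_fderiv_normal.clm_apply (differentiableAt_const Y))).neg

lemma fderiv_secondForm (X Y Z : E) :
    fderiv ℝ (fun x => secondForm f ν x X Y) q Z
      = -(fderiv ℝ (fderiv ℝ f) q Z X ⬝ᵥ fderiv ℝ ν q Y
        + fderiv ℝ f q X ⬝ᵥ fderiv ℝ (fderiv ℝ ν) q Z Y) := by
  have hX := h.differentiableAt_fderiv_map.clm_apply (differentiableAt_const X)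
  have hY := h.differentiableAt_fderiv_normal.clm_apply (differentiableAt_const Y)
  simp only [secondForm]
  rw [fderiv_fun_neg, _root_.neg_apply, fderiv_dotProduct hX hY,
    fderiv_clm_apply_apply h.differentiableAt_fderiv_map (differentiableAt_const X),
    fderiv_clm_apply_apply h.differentiableAt_fderiv_normal (differentiableAt_const Y)]
  simp

-- `d²ν` is eliminated by differentiating `II(X, η) = II(η, X)` in the direction `Y`.
lemma fderiv_secondForm_null {η : E} (hη : fderiv ℝ f q η = 0) (X Y : E) :
    fderiv ℝ (fun x => secondForm f ν x X Y) q η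
      = hessianAlong f (fderiv ℝ ν q η) q X Y - hessianAlong f (fderiv ℝ ν q Y) q X η
        - hessianAlong f (fderiv ℝ ν q X) q Y η := by
  have hsymm : (fun x => secondForm f ν x X η) =ᶠ[𝓝 q] fun x => secondForm f ν x η X := by
    filter_upwards [h.eventually_isFrontalAt] with x hx using hx.secondForm_comm X η
  have hd := h.fderiv_secondForm X η Y
  rw [hsymm.fderiv_eq, h.fderiv_secondForm, hη, zero_dotProduct] at hd
  rw [h.fderiv_secondForm, h.fderiv_fderiv_normal_comm η Y, h.fderiv_fderiv_map_comm η X]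
  simp only [hessianAlong]
  rw [h.fderiv_fderiv_map_comm X Y]
  linarith

lemma hasDerivAt_secondForm_line (η X Y : E) :
    HasDerivAt (fun t : ℝ => secondForm f ν (q + t • η) X Y)
      (fderiv ℝ (fun x => secondForm f ν x X Y) q η) 0 :=
  (h.differentiableAt_secondForm X Y).hasFDerivAt.hasLineDerivAt η

end IsFrontalAt

end Frontal

section Jacobian

variable {m : ℕ} {f ν : (Fin m → ℝ) → (Fin (m + 1) → ℝ)} {q : Fin m → ℝ}

lemma Kext_eq_div (f ν : (Fin m → ℝ) → (Fin (m + 1) → ℝ)) (q X Y : Fin m → ℝ) :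
    Kext f ν q X Y = gramDet (secondForm f ν q) X Y / gramDet (firstForm f q) X Y := by
  simp only [Kext, gramDet, secondForm, firstForm, neg_mul_neg, neg_sq]

/-- The matrix with rows `df(C₁), …, df(Cₘ), ν` at `q`, where `C₁, …, Cₘ` are the rows of `C`.
For `C = 1` its determinant is the Jacobian `λ`. -/
def frameMatrix (f ν : (Fin m → ℝ) → (Fin (m + 1) → ℝ)) (C : Matrix (Fin m) (Fin m) ℝ)
    (q : Fin m → ℝ) : Matrix (Fin (m + 1)) (Fin (m + 1)) ℝ :=
  of (Fin.snoc (fun k => fderiv ℝ f q (C k)) (ν q))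

@[simp] lemma frameMatrix_castSucc (C : Matrix (Fin m) (Fin m) ℝ) (k : Fin m) :
    frameMatrix f ν C q k.castSucc = fderiv ℝ f q (C k) := by
  ext; simp [frameMatrix]

@[simp] lemma frameMatrix_last (C : Matrix (Fin m) (Fin m) ℝ) :
    frameMatrix f ν C q (Fin.last m) = ν q := by
  ext; simp [frameMatrix]

lemma one_row_eq_single {ι : Type*} [DecidableEq ι] (k : ι) :
    (1 : Matrix ι ι ℝ) k = Pi.single k 1 :=
  funext fun _ => one_eq_pi_single

lemma det_frameMatrix_one : (frameMatrix f ν 1 q).det = lamb f ν q := by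
  simp only [lamb, frameMatrix, pd, one_row_eq_single]

lemma vecMul_frameMatrix_one (w : Fin (m + 1) → ℝ) :
    w ᵥ* frameMatrix f ν 1 q = fderiv ℝ f q (w ∘ Fin.castSucc) + w (Fin.last m) • ν q := by
  rw [vecMul_eq_sum, Fin.sum_univ_castSucc, frameMatrix_last]
  simp only [frameMatrix_castSucc, one_row_eq_single]
  conv_rhs => rw [pi_eq_sum_univ' (w ∘ Fin.castSucc), map_sum]
  simp

lemma det_frameMatrix (C : Matrix (Fin m) (Fin m) ℝ) :
    (frameMatrix f ν C q).det = C.det * lamb f ν q := by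
  let D : Matrix (Fin (m + 1)) (Fin (m + 1)) ℝ :=
    of (Fin.snoc (fun k => (Fin.snoc (C k) 0 : Fin (m + 1) → ℝ)) (Pi.single (Fin.last m) 1))
  have hD : D.det = C.det := by
    have hsub : D.submatrix Fin.castSucc Fin.castSucc = C := by ext; simp [D]
    rw [det_succ_row _ (Fin.last m), Fin.sum_univ_castSucc]
    simp [D, ← two_mul, hsub]
  have hmul : frameMatrix f ν C q = D * frameMatrix f ν 1 q := by
    ext1 i
    rw [mul_apply_eq_vecMul, vecMul_frameMatrix_one]
    induction i using Fin.lastCases with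
    | last =>
      have hlast : D (Fin.last m) ∘ Fin.castSucc = 0 := by ext; simp [D]
      rw [frameMatrix_last, hlast]
      simp [D]
    | cast k =>
      have hcast : D k.castSucc ∘ Fin.castSucc = C k := by ext; simp [D]
      rw [frameMatrix_castSucc, hcast]
      simp [D]
  rw [hmul, det_mul, hD, det_frameMatrix_one]

namespace IsFrontalAt

variable (h : IsFrontalAt f ν q)
include h

lemma contDiffAt_lamb : ContDiffAt ℝ 1 (lamb f ν) q := by
  simp only [funext fun x => (det_frameMatrix_one (f := f) (ν := ν) (q := x)).symm]
  refine contDiffAt_det fun i => Fin.lastCases ?_ (fun k => ?_) i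
  · simpa only [frameMatrix_last] using h.contDiffAt_normal.of_le (by norm_num)
  · simpa only [frameMatrix_castSucc] using h.contDiffAt_fderiv_map.clm_apply contDiffAt_const

lemma exists_null_of_lamb_eq_zero (h0 : lamb f ν q = 0) : ∃ η, η ≠ 0 ∧ fderiv ℝ f q η = 0 := by
  obtain ⟨w, hw, hker⟩ := exists_vecMul_eq_zero_iff.2 (det_frameMatrix_one.trans h0)
  rw [vecMul_frameMatrix_one] at hker
  have hlast : w (Fin.last m) = 0 := by
    simpa [add_dotProduct, h.tangent_normal, h.normal_unit] using congrArg (· ⬝ᵥ ν q) hker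
  refine ⟨w ∘ Fin.castSucc, fun h0 => hw <| funext fun i => ?_, by simpa [hlast] using hker⟩
  exact Fin.lastCases hlast (fun k => congrFun h0 k) i

end IsFrontalAt

lemma fderiv_injective_of_lamb_ne_zero (h0 : lamb f ν q ≠ 0) :
    Function.Injective (fderiv ℝ f q) := by
  refine (injective_iff_map_eq_zero _).2 fun X hX => ?_
  have hker : (Fin.snoc X 0 : Fin (m + 1) → ℝ) ᵥ* frameMatrix f ν 1 q = 0 := by
    have hres : (Fin.snoc X 0 : Fin (m + 1) → ℝ) ∘ Fin.castSucc = X := by ext; simp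
    simp [vecMul_frameMatrix_one, hres, hX]
  have hsnoc := eq_zero_of_vecMul_eq_zero (det_frameMatrix_one.trans_ne h0) hker
  exact funext fun k => by simpa using congrFun hsnoc k.castSucc

lemma gramDet_firstForm_pos {X Y : Fin m → ℝ} (h0 : lamb f ν q ≠ 0)
    (hXY : LinearIndependent ℝ ![X, Y]) : 0 < gramDet (firstForm f q) X Y := by
  refine gramDet_dotProduct_pos <| LinearIndependent.pair_iff.2 fun s t hst =>
    LinearIndependent.pair_iff.1 hXY s t <| fderiv_injective_of_lamb_ne_zero h0 ?_
  simpa using hst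

end Jacobian

section A2Point

lemma exists_row_eq_det_ne_zero {ι K : Type*} [Fintype ι] [DecidableEq ι] [Field K] {v : ι → K}
    (hv : v ≠ 0) : ∃ (C : Matrix ι ι K) (r : ι), C r = v ∧ C.det ≠ 0 := by
  obtain ⟨r, hr⟩ := Function.ne_iff.1 hv
  refine ⟨(updateCol 1 r v)ᵀ, r, by simp [← updateRow_transpose], ?_⟩
  rwa [det_transpose, ← cramer_apply, cramer_one]

variable {m : ℕ} {f ν : (Fin m → ℝ) → (Fin (m + 1) → ℝ)} {q : Fin m → ℝ}

/-- `n` is a unit conormal of the singular hypersurface at the singular point `q`: a unit vector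
orthogonal to `ν` and to the image of `df`, which at an `A₂`-point is `df(T_qΣ)`. -/
structure IsUnitConormal (f ν : (Fin m → ℝ) → (Fin (m + 1) → ℝ)) (q : Fin m → ℝ)
    (n : Fin (m + 1) → ℝ) : Prop where
  unit : n ⬝ᵥ n = 1
  normal : n ⬝ᵥ ν q = 0
  tangent : ∀ Z, n ⬝ᵥ fderiv ℝ f q Z = 0

/-- The unit conormal `N` pointing into the cusp, i.e. `⟨d²f(η, η), N⟩ > 0` in the null directions
`η`. It is `sgn(dλ(η)) n` for the conormal `n` in the definition of the singular shape operator,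
and it does not depend on the orientations chosen there. -/
structure IsCuspidalConormal (f ν : (Fin m → ℝ) → (Fin (m + 1) → ℝ)) (q : Fin m → ℝ)
    (N : Fin (m + 1) → ℝ) : Prop extends IsUnitConormal f ν q N where
  hessianAlong_pos : ∀ η, η ≠ 0 → fderiv ℝ f q η = 0 → 0 < hessianAlong f N q η η

lemma IsUnitConormal.sign_smul {n : Fin (m + 1) → ℝ} (hn : IsUnitConormal f ν q n) {s : ℝ}
    (hs : s ≠ 0) : IsUnitConormal f ν q (Real.sign s • n) where
  unit := by
    rcases Real.sign_apply_eq_of_ne_zero s hs with h | h <;> simp [h, hn.unit]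
  normal := by rw [smul_dotProduct, hn.normal, smul_zero]
  tangent Z := by rw [smul_dotProduct, hn.tangent, smul_zero]

lemma IsFrontalAt.det_mul_fderiv_lamb (h : IsFrontalAt f ν q) {n : Fin (m + 1) → ℝ}
    (hn : IsUnitConormal f ν q n) {C : Matrix (Fin m) (Fin m) ℝ} {r : Fin m}
    (hr : fderiv ℝ f q (C r) = 0) (Z : Fin m → ℝ) :
    C.det * fderiv ℝ (lamb f ν) q Z
      = hessianAlong f n q Z (C r) * ((frameMatrix f ν C q).updateRow r.castSucc n).det := by
  have hrows : ∀ i, DifferentiableAt ℝ (fun x => frameMatrix f ν C x i) q := by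
    refine Fin.lastCases ?_ fun k => ?_
    · simpa only [frameMatrix_last] using h.differentiableAt_normal
    · simpa only [frameMatrix_castSucc] using
        h.differentiableAt_fderiv_map.clm_apply (differentiableAt_const _)
  have horth : ∀ i ≠ r.castSucc, frameMatrix f ν C q i ⬝ᵥ n = 0 := by
    refine Fin.lastCases (fun _ => ?_) fun k _ => ?_
    · rw [frameMatrix_last, dotProduct_comm, hn.normal]
    · rw [frameMatrix_castSucc, dotProduct_comm, hn.tangent]
  have hdet : (fun x => (frameMatrix f ν C x).det) = fun x => C.det * lamb f ν x :=
    funext fun _ => det_frameMatrix C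
  have hjac := fderiv_det_of_row_eq_zero hrows ((frameMatrix_castSucc C r).trans hr) Z
  rw [hdet, fderiv_const_mul (h.contDiffAt_lamb.differentiableAt one_ne_zero)] at hjac
  simp only [frameMatrix_castSucc] at hjac
  rw [fderiv_clm_apply_apply h.differentiableAt_fderiv_map (differentiableAt_const _),
    det_updateRow_eq_dotProduct_mul _ hn.unit horth] at hjac
  simpa [hessianAlong] using hjac

namespace IsA2

variable (hA : IsA2 f ν q) {η : Fin m → ℝ}
include hA

lemma fderiv_lamb_null_ne_zero (hη0 : η ≠ 0) (hη : fderiv ℝ f q η = 0) :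
    fderiv ℝ (lamb f ν) q η ≠ 0 :=
  hA.2.2 η hη0 hη

lemma exists_fderiv_lamb_sub_smul_eq_zero (hη0 : η ≠ 0) (hη : fderiv ℝ f q η = 0) (Z : Fin m → ℝ) :
    ∃ c : ℝ, fderiv ℝ (lamb f ν) q (Z - c • η) = 0 := by
  refine ⟨fderiv ℝ (lamb f ν) q Z / fderiv ℝ (lamb f ν) q η, ?_⟩
  rw [map_sub, map_smul, smul_eq_mul, div_mul_cancel₀ _ (hA.fderiv_lamb_null_ne_zero hη0 hη),
    sub_self]

lemma exists_smul_eq_of_null (hη0 : η ≠ 0) (hη : fderiv ℝ f q η = 0) {η' : Fin m → ℝ}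
    (hη' : fderiv ℝ f q η' = 0) : ∃ c : ℝ, η' = c • η := by
  obtain ⟨c, hc⟩ := hA.exists_fderiv_lamb_sub_smul_eq_zero hη0 hη η'
  refine ⟨c, sub_eq_zero.1 <| by_contra fun hne => ?_⟩
  exact hA.fderiv_lamb_null_ne_zero hne (by simp [hη, hη']) hc

lemma exists_tangent_fderiv_eq (h : IsFrontalAt f ν q) (Z : Fin m → ℝ) :
    ∃ T, fderiv ℝ (lamb f ν) q T = 0 ∧ fderiv ℝ f q T = fderiv ℝ f q Z := by
  obtain ⟨η, hη0, hη⟩ := h.exists_null_of_lamb_eq_zero hA.1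
  obtain ⟨c, hc⟩ := hA.exists_fderiv_lamb_sub_smul_eq_zero hη0 hη Z
  exact ⟨Z - c • η, hc, by simp [hη]⟩

lemma linearIndependent_tangent_null (hη0 : η ≠ 0) (hη : fderiv ℝ f q η = 0) {X : Fin m → ℝ}
    (hX0 : X ≠ 0) (hX : fderiv ℝ (lamb f ν) q X = 0) : LinearIndependent ℝ ![X, η] := by
  refine LinearIndependent.pair_iff.2 fun s t hst => ?_
  have ht : t = 0 := by
    simpa [hX, hA.fderiv_lamb_null_ne_zero hη0 hη] using congrArg (fderiv ℝ (lamb f ν) q) hst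
  exact ⟨by simpa [ht, hX0] using hst, ht⟩

lemma eventually_along_null (h : IsFrontalAt f ν q) (hη0 : η ≠ 0) (hη : fderiv ℝ f q η = 0)
    {P : (Fin m → ℝ) → Prop} (hP : ∀ᶠ x in 𝓝 q, lamb f ν x ≠ 0 → P x) :
    ∀ᶠ t in 𝓝[≠] (0 : ℝ), P (q + t • η) := by
  have hd : HasDerivAt (fun t : ℝ => lamb f ν (q + t • η)) (fderiv ℝ (lamb f ν) q η) 0 :=
    (h.contDiffAt_lamb.differentiableAt one_ne_zero).hasFDerivAt.hasLineDerivAt η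
  filter_upwards [hd.eventually_ne (hA.fderiv_lamb_null_ne_zero hη0 hη) (c := 0),
    (tendsto_add_smul_nhdsNE q η).eventually hP] with t ht hPt using hPt ht

lemma det_updateRow_frameMatrix_ne_zero (h : IsFrontalAt f ν q) {n : Fin (m + 1) → ℝ}
    (hn : IsUnitConormal f ν q n) {C : Matrix (Fin m) (Fin m) ℝ} (hC : C.det ≠ 0) {r : Fin m}
    (hr : fderiv ℝ f q (C r) = 0) : ((frameMatrix f ν C q).updateRow r.castSucc n).det ≠ 0 := by
  have hr0 : C r ≠ 0 := fun h0 => hC <| det_eq_zero_of_row_eq_zero r (congrFun h0)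
  refine right_ne_zero_of_mul (a := hessianAlong f n q (C r) (C r)) ?_
  rw [← h.det_mul_fderiv_lamb hn hr]
  exact mul_ne_zero hC (hA.fderiv_lamb_null_ne_zero hr0 hr)

lemma hessianAlong_null_eq_zero_iff (h : IsFrontalAt f ν q) {n : Fin (m + 1) → ℝ}
    (hn : IsUnitConormal f ν q n) (hη0 : η ≠ 0) (hη : fderiv ℝ f q η = 0) {Z : Fin m → ℝ} :
    hessianAlong f n q Z η = 0 ↔ fderiv ℝ (lamb f ν) q Z = 0 := by
  obtain ⟨C, r, rfl, hC⟩ := exists_row_eq_det_ne_zero hη0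
  have hB := hA.det_updateRow_frameMatrix_ne_zero h hn hC hη
  rw [← mul_eq_zero_iff_right hB, ← h.det_mul_fderiv_lamb hn hη, mul_eq_zero_iff_left hC]

lemma eq_add_of_orthogonal_tangent (h : IsFrontalAt f ν q) {n : Fin (m + 1) → ℝ}
    (hn : IsUnitConormal f ν q n) {w : Fin (m + 1) → ℝ} (hw : ∀ Z, w ⬝ᵥ fderiv ℝ f q Z = 0) :
    w = (w ⬝ᵥ n) • n + (w ⬝ᵥ ν q) • ν q := by
  obtain ⟨η, hη0, hη⟩ := h.exists_null_of_lamb_eq_zero hA.1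
  obtain ⟨C, r, rfl, hC⟩ := exists_row_eq_det_ne_zero hη0
  set d := w - ((w ⬝ᵥ n) • n + (w ⬝ᵥ ν q) • ν q) with hd
  have hνn : ν q ⬝ᵥ n = 0 := by rw [dotProduct_comm, hn.normal]
  have hdn : d ⬝ᵥ n = 0 := by simp [hd, hn.unit, hνn]
  have hdν : d ⬝ᵥ ν q = 0 := by simp [hd, hn.normal, h.normal_unit]
  have hdf (Z : Fin m → ℝ) : d ⬝ᵥ fderiv ℝ f q Z = 0 := by
    simp [hd, hw, hn.tangent, dotProduct_comm (ν q), h.tangent_normal]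
  refine sub_eq_zero.1 <| eq_zero_of_mulVec_eq_zero
    (hA.det_updateRow_frameMatrix_ne_zero h hn hC hη) (funext fun i => ?_)
  rw [mulVec, dotProduct_comm]
  obtain rfl | hi := eq_or_ne i r.castSucc
  · rwa [updateRow_self]
  · rw [updateRow_ne hi]
    refine Fin.lastCases ?_ (fun k => ?_) i
    · rwa [frameMatrix_last]
    · rw [frameMatrix_castSucc]
      exact hdf _

lemma eq_smul_of_orthogonal (h : IsFrontalAt f ν q) {n : Fin (m + 1) → ℝ}
    (hn : IsUnitConormal f ν q n) {w : Fin (m + 1) → ℝ} (hw : ∀ Z, w ⬝ᵥ fderiv ℝ f q Z = 0)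
    (hwν : w ⬝ᵥ ν q = 0) : w = (w ⬝ᵥ n) • n := by
  simpa [hwν] using hA.eq_add_of_orthogonal_tangent h hn hw

lemma isCuspidalConormal_sign_smul (h : IsFrontalAt f ν q) {n : Fin (m + 1) → ℝ}
    (hn : IsUnitConormal f ν q n) (hη0 : η ≠ 0) (hη : fderiv ℝ f q η = 0) :
    IsCuspidalConormal f ν q (Real.sign (hessianAlong f n q η η) • n) := by
  have hs : hessianAlong f n q η η ≠ 0 :=
    (hA.hessianAlong_null_eq_zero_iff h hn hη0 hη).not.2 (hA.fderiv_lamb_null_ne_zero hη0 hη)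
  refine ⟨hn.sign_smul hs, fun η' hη'0 hη' => ?_⟩
  obtain ⟨c, rfl⟩ := hA.exists_smul_eq_of_null hη0 hη hη'
  have hc : c ≠ 0 := left_ne_zero_of_smul hη'0
  calc 0 < c ^ 2 * (Real.sign (hessianAlong f n q η η) * hessianAlong f n q η η) :=
        mul_pos (by positivity) (Real.sign_mul_pos_of_ne_zero _ hs)
    _ = hessianAlong f (Real.sign (hessianAlong f n q η η) • n) q (c • η) (c • η) := by
        simp only [hessianAlong, map_smul, _root_.smul_apply, smul_dotProduct, dotProduct_smul,
          smul_eq_mul]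
        ring

lemma isCuspidalConormal_unique (h : IsFrontalAt f ν q) {N N' : Fin (m + 1) → ℝ}
    (hN : IsCuspidalConormal f ν q N) (hN' : IsCuspidalConormal f ν q N') : N' = N := by
  obtain ⟨η, hη0, hη⟩ := h.exists_null_of_lamb_eq_zero hA.1
  set ε := N' ⬝ᵥ N
  have hNε : N' = ε • N := hA.eq_smul_of_orthogonal h hN.1 hN'.tangent hN'.normal
  have hε2 : ε * ε = 1 := by
    simpa [hNε, hN.unit] using hN'.unit
  have hε : 0 < ε := by
    have hpos := hN'.hessianAlong_pos η hη0 hη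
    rw [hNε, hessianAlong, dotProduct_smul] at hpos
    exact pos_of_mul_pos_left hpos (hN.hessianAlong_pos η hη0 hη).le
  rw [hNε, (mul_self_eq_one_iff.1 hε2).resolve_right (by linarith), one_smul]

end IsA2

end A2Point

section Curvature

lemma hessianAlong_smul {E ι : Type*} [NormedAddCommGroup E] [NormedSpace ℝ E] [Fintype ι]
    (f : E → ι → ℝ) (c : ℝ) (N : ι → ℝ) (q X Y : E) :
    hessianAlong f (c • N) q X Y = c * hessianAlong f N q X Y :=
  dotProduct_smul _ _ _

variable {m : ℕ} {f ν : (Fin m → ℝ) → (Fin (m + 1) → ℝ)} {q : Fin m → ℝ} {n : Fin (m + 1) → ℝ}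
  {X Y η : Fin m → ℝ}

lemma IsFrontalAt.fderiv_normal_null_eq_smul (h : IsFrontalAt f ν q) (hA : IsA2 f ν q)
    (hn : IsUnitConormal f ν q n) (hη : fderiv ℝ f q η = 0) :
    fderiv ℝ ν q η = (fderiv ℝ ν q η ⬝ᵥ n) • n := by
  refine hA.eq_smul_of_orthogonal h hn (fun Z => ?_) (h.fderiv_normal_normal η)
  rw [dotProduct_comm]
  exact neg_eq_zero.1 (h.secondForm_null hη Z)

lemma IsFrontAt.fderiv_normal_null_dotProduct_ne_zero (h : IsFrontAt f ν q) (hA : IsA2 f ν q)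
    (hn : IsUnitConormal f ν q n) (hη0 : η ≠ 0) (hη : fderiv ℝ f q η = 0) :
    fderiv ℝ ν q η ⬝ᵥ n ≠ 0 := fun h0 =>
  hη0 <| h.eq_zero_of_null η hη <| by
    rw [h.fderiv_normal_null_eq_smul hA hn hη, h0, zero_smul]

-- In a null direction `η`, the vector `dν(η)` is a nonzero conormal.
lemma IsFrontAt.exists_isUnitConormal (h : IsFrontAt f ν q) (hη0 : η ≠ 0)
    (hη : fderiv ℝ f q η = 0) : ∃ n, IsUnitConormal f ν q n := by
  set v := fderiv ℝ ν q η
  have hv0 : v ≠ 0 := fun hv => hη0 (h.eq_zero_of_null η hη hv)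
  have hv : 0 < v ⬝ᵥ v := by simpa using dotProduct_star_self_pos_iff.2 hv0
  refine ⟨(√(v ⬝ᵥ v))⁻¹ • v, ?_, ?_, fun Z => ?_⟩
  · have hsqrt := Real.mul_self_sqrt hv.le
    have hne := (Real.sqrt_pos.2 hv).ne'
    simp only [smul_dotProduct, dotProduct_smul, smul_eq_mul]
    field_simp
    linarith
  · rw [smul_dotProduct, h.fderiv_normal_normal, smul_zero]
  · have hZ : v ⬝ᵥ fderiv ℝ f q Z = 0 := by
      rw [dotProduct_comm]
      exact neg_eq_zero.1 (h.secondForm_null hη Z)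
    rw [smul_dotProduct, hZ, smul_zero]

lemma IsFrontAt.exists_isCuspidalConormal (h : IsFrontAt f ν q) (hA : IsA2 f ν q) :
    ∃ N, IsCuspidalConormal f ν q N := by
  obtain ⟨η, hη0, hη⟩ := h.exists_null_of_lamb_eq_zero hA.1
  obtain ⟨n, hn⟩ := h.exists_isUnitConormal hη0 hη
  exact ⟨_, hA.isCuspidalConormal_sign_smul h.1 hn hη0 hη⟩

lemma IsA2.eventually_mul_gramDet_firstForm_le (hA : IsA2 f ν q) (h : IsFrontalAt f ν q)
    (hη0 : η ≠ 0) (hη : fderiv ℝ f q η = 0) {δ : ℝ}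
    (hK : ∀ᶠ x in 𝓝 q, lamb f ν x ≠ 0 → ∀ X Y : Fin m → ℝ,
      LinearIndependent ℝ ![X, Y] → δ ≤ Kext f ν x X Y) (hXY : LinearIndependent ℝ ![X, Y]) :
    ∀ᶠ t in 𝓝[≠] (0 : ℝ), δ * gramDet (firstForm f (q + t • η)) X Y
      ≤ gramDet (secondForm f ν (q + t • η)) X Y := by
  refine hA.eventually_along_null h hη0 hη
    (P := fun x => δ * gramDet (firstForm f x) X Y ≤ gramDet (secondForm f ν x) X Y)
    (hK.mono fun x hx hx0 => ?_)
  have hle := hx hx0 X Y hXY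
  rwa [Kext_eq_div, le_div_iff₀ (gramDet_firstForm_pos hx0 hXY)] at hle

variable (h : IsFrontAt f ν q) (hA : IsA2 f ν q)
  (hK : ∀ᶠ x in 𝓝 q, lamb f ν x ≠ 0 → ∀ X Y : Fin m → ℝ,
    LinearIndependent ℝ ![X, Y] → 0 ≤ Kext f ν x X Y)
include h hA hK

lemma eventually_gramDet_secondForm_nonneg (hη0 : η ≠ 0) (hη : fderiv ℝ f q η = 0)
    (hXY : LinearIndependent ℝ ![X, Y]) :
    ∀ᶠ t in 𝓝[≠] (0 : ℝ), 0 ≤ gramDet (secondForm f ν (q + t • η)) X Y := by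
  simpa only [zero_mul] using hA.eventually_mul_gramDet_firstForm_le h.1 hη0 hη hK hXY

-- If `II(X, X) ≠ 0`, then the derivative of `II(η, η)` along `η` would have to vanish.
lemma secondForm_self_eq_zero_of_tangent (hX : fderiv ℝ (lamb f ν) q X = 0) :
    secondForm f ν q X X = 0 := by
  obtain rfl | hX0 := eq_or_ne X 0
  · simp [secondForm]
  obtain ⟨η, hη0, hη⟩ := h.exists_null_of_lamb_eq_zero hA.1
  obtain ⟨n, hn⟩ := h.exists_isUnitConormal hη0 hη
  have hII := mul_eq_zero_of_gramDet_nonneg (h.hasDerivAt_secondForm_line η)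
    (by simpa using h.secondForm_null hη η) (by simpa using h.secondForm_null hη X)
    (eventually_gramDet_secondForm_nonneg h hA hK hη0 hη
      (hA.linearIndependent_tangent_null hη0 hη hX0 hX))
  rw [zero_smul, add_zero, h.fderiv_secondForm_null hη, sub_self, zero_sub,
    h.fderiv_normal_null_eq_smul hA hn hη, hessianAlong_smul] at hII
  refine (mul_eq_zero.1 hII).resolve_right (neg_ne_zero.2 (mul_ne_zero ?_ ?_))
  · exact h.fderiv_normal_null_dotProduct_ne_zero hA hn hη0 hη
  · exact (hA.hessianAlong_null_eq_zero_iff h.1 hn hη0 hη).not.2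
      (hA.fderiv_lamb_null_ne_zero hη0 hη)

lemma secondForm_eq_zero_of_tangent (hX : fderiv ℝ (lamb f ν) q X = 0)
    (hY : fderiv ℝ (lamb f ν) q Y = 0) : secondForm f ν q X Y = 0 := by
  have hadd := secondForm_self_eq_zero_of_tangent h hA hK (X := X + Y) (by simp [hX, hY])
  have hpolar : secondForm f ν q (X + Y) (X + Y) = secondForm f ν q X X + secondForm f ν q Y Y
      + secondForm f ν q X Y + secondForm f ν q Y X := by
    simp only [secondForm, map_add, add_dotProduct, dotProduct_add]
    ring
  rw [hadd, secondForm_self_eq_zero_of_tangent h hA hK hX,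
    secondForm_self_eq_zero_of_tangent h hA hK hY, h.secondForm_comm Y X] at hpolar
  linarith

lemma fderiv_normal_tangent_eq_smul (hn : IsUnitConormal f ν q n)
    (hX : fderiv ℝ (lamb f ν) q X = 0) : fderiv ℝ ν q X = (fderiv ℝ ν q X ⬝ᵥ n) • n := by
  refine hA.eq_smul_of_orthogonal h.1 hn (fun Z => ?_) (h.fderiv_normal_normal X)
  obtain ⟨T, hT, hTZ⟩ := hA.exists_tangent_fderiv_eq h.1 Z
  rw [← hTZ, dotProduct_comm]
  exact neg_eq_zero.1 (secondForm_eq_zero_of_tangent h hA hK hT hX)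

lemma fderiv_secondForm_null_of_tangent (hn : IsUnitConormal f ν q n) (hη0 : η ≠ 0)
    (hη : fderiv ℝ f q η = 0) (hX : fderiv ℝ (lamb f ν) q X = 0)
    (hY : fderiv ℝ (lamb f ν) q Y = 0) :
    fderiv ℝ (fun x => secondForm f ν x X Y) q η
      = (fderiv ℝ ν q η ⬝ᵥ n) * hessianAlong f n q X Y := by
  rw [h.fderiv_secondForm_null hη, h.fderiv_normal_null_eq_smul hA hn hη,
    fderiv_normal_tangent_eq_smul h hA hK hn hX, fderiv_normal_tangent_eq_smul h hA hK hn hY]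
  simp [hessianAlong_smul, hn.unit, (hA.hessianAlong_null_eq_zero_iff h.1 hn hη0 hη).2 hX,
    (hA.hessianAlong_null_eq_zero_iff h.1 hn hη0 hη).2 hY]

lemma gramDet_hessianAlong_nonneg (hn : IsUnitConormal f ν q n)
    (hX : fderiv ℝ (lamb f ν) q X = 0) (hY : fderiv ℝ (lamb f ν) q Y = 0)
    (hXY : LinearIndependent ℝ ![X, Y]) : 0 ≤ gramDet (hessianAlong f n q) X Y := by
  obtain ⟨η, hη0, hη⟩ := h.exists_null_of_lamb_eq_zero hA.1
  set b := fderiv ℝ ν q η ⬝ᵥ n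
  have hb : b ≠ 0 := h.fderiv_normal_null_dotProduct_ne_zero hA hn hη0 hη
  have hII {Z W : Fin m → ℝ} (hZ : fderiv ℝ (lamb f ν) q Z = 0)
      (hW : fderiv ℝ (lamb f ν) q W = 0) : secondForm f ν (q + (0 : ℝ) • η) Z W = 0 := by
    simpa using secondForm_eq_zero_of_tangent h hA hK hZ hW
  have hgram := gramDet_nonneg_of_hasDerivAt (h.hasDerivAt_secondForm_line η)
    (hII hX hX) (hII hY hY) (hII hX hY) (eventually_gramDet_secondForm_nonneg h hA hK hη0 hη hXY)
  refine nonneg_of_mul_nonneg_right ?_ (show 0 < b ^ 2 by positivity)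
  calc 0 ≤ _ := hgram
    _ = b ^ 2 * gramDet (hessianAlong f n q) X Y := by
      simp only [gramDet, fderiv_secondForm_null_of_tangent h hA hK hn hη0 hη, hX, hY, b]
      ring

-- Along a null direction `Kext(X, Y)` tends to `det II / det I = 0`.
lemma not_exists_pos_le_Kext (hX : fderiv ℝ (lamb f ν) q X = 0)
    (hY : fderiv ℝ (lamb f ν) q Y = 0) (hXY : 0 < gramDet (firstForm f q) X Y) :
    ¬∃ δ > 0, ∀ᶠ x in 𝓝 q, lamb f ν x ≠ 0 → ∀ Z Z' : Fin m → ℝ,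
      LinearIndependent ℝ ![Z, Z'] → δ ≤ Kext f ν x Z Z' := by
  rintro ⟨δ, hδ, hKδ⟩
  obtain ⟨η, hη0, hη⟩ := h.exists_null_of_lamb_eq_zero hA.1
  have lim {b : (Fin m → ℝ) → (Fin m → ℝ) → (Fin m → ℝ) → ℝ}
      (hb : ∀ Z W, DifferentiableAt ℝ (fun x => b x Z W) q) :
      Tendsto (fun t : ℝ => gramDet (b (q + t • η)) X Y) (𝓝[≠] 0) (𝓝 (gramDet (b q) X Y)) :=
    have c Z W := (hb Z W).continuousAt.tendsto.comp (tendsto_add_smul_nhdsNE q η)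
    ((c X X).mul (c Y Y)).sub ((c X Y).pow 2)
  have hle := le_of_tendsto_of_tendsto ((lim h.differentiableAt_firstForm).const_mul δ)
    (lim h.differentiableAt_secondForm) (hA.eventually_mul_gramDet_firstForm_le h.1 hη0 hη hKδ
      (linearIndependent_of_gramDet_firstForm_ne_zero hXY.ne'))
  refine (mul_pos hδ hXY).not_ge (hle.trans_eq ?_)
  simp [gramDet, secondForm_eq_zero_of_tangent h hA hK, hX, hY]

end Curvature

section PrincipalCurvature

variable {m : ℕ} {f ν : (Fin m → ℝ) → (Fin (m + 1) → ℝ)} {q : Fin m → ℝ}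

lemma IsUnitConormal.of_tangent (h : IsFrontalAt f ν q) (hA : IsA2 f ν q) {n : Fin (m + 1) → ℝ}
    (hunit : n ⬝ᵥ n = 1) (hnormal : n ⬝ᵥ ν q = 0)
    (htangent : ∀ Z, fderiv ℝ (lamb f ν) q Z = 0 → n ⬝ᵥ fderiv ℝ f q Z = 0) :
    IsUnitConormal f ν q n := by
  refine ⟨hunit, hnormal, fun Z => ?_⟩
  obtain ⟨T, hT, hTZ⟩ := hA.exists_tangent_fderiv_eq h Z
  rw [← hTZ, htangent T hT]

lemma hessianAlong_eq_fderiv_tangentField {n : Fin (m + 1) → ℝ} (h : IsFrontalAt f ν q)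
    (hn : IsUnitConormal f ν q n) {V : (Fin m → ℝ) → (Fin m → ℝ)} (hV : DifferentiableAt ℝ V q)
    (X : Fin m → ℝ) :
    hessianAlong f n q X (V q) = fderiv ℝ (fun x => fderiv ℝ f x (V x)) q X ⬝ᵥ n := by
  rw [fderiv_clm_apply_apply h.differentiableAt_fderiv_map hV, add_dotProduct,
    dotProduct_comm (fderiv ℝ f q _), hn.tangent, add_zero, hessianAlong]

lemma IsNormalPart.eq_hessianAlong_smul (h : IsFrontalAt f ν q) (hA : IsA2 f ν q)
    {n : Fin (m + 1) → ℝ} (hn : IsUnitConormal f ν q n) {V : (Fin m → ℝ) → (Fin m → ℝ)}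
    (hV : DifferentiableAt ℝ V q) {X : Fin m → ℝ} (hII : secondForm f ν q (V q) X = 0)
    {a : Fin (m + 1) → ℝ}
    (ha : IsNormalPart f ν q (fderiv ℝ (fun x => fderiv ℝ f x (V x)) q X) a) :
    a = hessianAlong f n q X (V q) • n := by
  obtain ⟨htangent, Z, -, hZ⟩ := ha
  have hperp (W : Fin m → ℝ) : a ⬝ᵥ fderiv ℝ f q W = 0 := by
    obtain ⟨T, hT, hTW⟩ := hA.exists_tangent_fderiv_eq h W
    rw [← hTW, htangent T hT]
  have hnormal : a ⬝ᵥ ν q = 0 := by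
    have hdot := congrArg (· ⬝ᵥ ν q) hZ
    simpa [sub_dotProduct, h.fderiv_tangentField_normal hV, hII, h.tangent_normal] using hdot
  have hn' : a ⬝ᵥ n = hessianAlong f n q X (V q) := by
    have hdot := congrArg (· ⬝ᵥ n) hZ
    simp only [sub_dotProduct, dotProduct_comm (fderiv ℝ f q Z), hn.tangent] at hdot
    rw [hessianAlong_eq_fderiv_tangentField h hn hV, sub_eq_zero.1 hdot]
  rw [← hn']
  exact hA.eq_smul_of_orthogonal h hn hperp hnormal

-- Differentiate `⟨n, df V⟩ = 0` along the singular hypersurface.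
lemma hessianAlong_eq_neg_fderiv_dotProduct (h : IsFrontalAt f ν q) (hA : IsA2 f ν q)
    {n : (Fin m → ℝ) → (Fin (m + 1) → ℝ)} (hn : ContDiffAt ℝ 1 n q)
    (hnq : IsUnitConormal f ν q (n q))
    (hnT : ∀ᶠ x in 𝓝 q, lamb f ν x = 0 →
      ∀ Z, fderiv ℝ (lamb f ν) x Z = 0 → n x ⬝ᵥ fderiv ℝ f x Z = 0)
    {V : (Fin m → ℝ) → (Fin m → ℝ)} (hV : ContDiffAt ℝ 1 V q)
    (hVT : ∀ᶠ x in 𝓝 q, lamb f ν x = 0 → fderiv ℝ (lamb f ν) x (V x) = 0)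
    {X : Fin m → ℝ} (hX : fderiv ℝ (lamb f ν) q X = 0) :
    hessianAlong f (n q) q X (V q) = -(fderiv ℝ n q X ⬝ᵥ fderiv ℝ f q (V q)) := by
  have hfV : ContDiffAt ℝ 1 (fun x => fderiv ℝ f x (V x)) q :=
    h.contDiffAt_fderiv_map.clm_apply hV
  have hzero := fderiv_eq_zero_of_eq_zero_on_levelSet h.contDiffAt_lamb
    (contDiffAt_dotProduct hn hfV) hA.1 hA.2.1
    (hnT.mp (hVT.mono fun x hVx hnx hx => hnx hx _ (hVx hx))) hX
  rw [fderiv_dotProduct (hn.differentiableAt one_ne_zero) (hfV.differentiableAt one_ne_zero)]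
    at hzero
  rw [hessianAlong_eq_fderiv_tangentField h hnq (hV.differentiableAt one_ne_zero),
    dotProduct_comm]
  exact eq_neg_of_add_eq_zero_right hzero

lemma of_dite_eq_updateRow_frameMatrix (c : Fin m → Fin m → ℝ) (η : Fin m → ℝ)
    (n : Fin (m + 1) → ℝ) {r : Fin m} (hr : (r : ℕ) = m - 1) :
    (of fun i : Fin (m + 1) =>
        if h : (i : ℕ) < m - 1 then fderiv ℝ f q (c ⟨(i : ℕ), by omega⟩)
        else if (i : ℕ) = m - 1 then n else ν q)
      = (frameMatrix f ν (of fun i => if (i : ℕ) < m - 1 then c i else η) q).updateRow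
          r.castSucc n := by
  ext i j
  induction i using Fin.lastCases with
  | last =>
    have hm : ¬m < m - 1 ∧ m ≠ m - 1 := by omega
    simp [updateRow_apply, (Fin.castSucc_lt_last r).ne', hm]
  | cast k =>
    obtain rfl | hk := eq_or_ne k r
    · simp [hr]
    · have hlt : (k : ℕ) < m - 1 := by omega
      have hrow : (of fun i : Fin m => if (i : ℕ) < m - 1 then c i else η) k = c k := if_pos hlt
      simp [updateRow_apply, hk, hlt, hrow]

lemma IsFrontalAt.sign_fderiv_lamb_null (h : IsFrontalAt f ν q) {n : Fin (m + 1) → ℝ}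
    (hn : IsUnitConormal f ν q n) {C : Matrix (Fin m) (Fin m) ℝ} {r : Fin m}
    (hr : fderiv ℝ f q (C r) = 0) (hC : 0 < C.det)
    (hB : 0 < ((frameMatrix f ν C q).updateRow r.castSucc n).det) :
    Real.sign (fderiv ℝ (lamb f ν) q (C r)) = Real.sign (hessianAlong f n q (C r) (C r)) := by
  have hjac := h.det_mul_fderiv_lamb hn hr (C r)
  obtain hneg | hzero | hpos := lt_trichotomy (hessianAlong f n q (C r) (C r)) 0
  · rw [Real.sign_of_neg hneg, Real.sign_of_neg]
    exact neg_of_mul_neg_right (hjac.trans_lt (mul_neg_of_neg_of_pos hneg hB)) hC.le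
  · rw [hzero, zero_mul] at hjac
    rw [hzero, (mul_eq_zero.1 hjac).resolve_left hC.ne']
  · rw [Real.sign_of_pos hpos, Real.sign_of_pos]
    exact pos_of_mul_pos_right ((mul_pos hpos hB).trans_eq hjac.symm) hC.le

lemma IsSingPrincCurvVec.exists_isCuspidalConormal (h : IsFrontalAt f ν q) (hA : IsA2 f ν q)
    {κ : ℝ} {X : Fin m → ℝ} (hX : IsSingPrincCurvVec f ν q κ X) :
    ∃ N, IsCuspidalConormal f ν q N ∧ ∀ V : (Fin m → ℝ) → (Fin m → ℝ), ContDiffAt ℝ 1 V q →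
      (∀ᶠ x in 𝓝 q, lamb f ν x = 0 → fderiv ℝ (lamb f ν) x (V x) = 0) →
      hessianAlong f N q X (V q) = κ * firstForm f q X (V q) := by
  obtain ⟨-, hXT, W, n, c, η, hW, hqW, hn, hnW, hη, hη0, -, -, hC, hB, hshape⟩ := hX
  obtain ⟨i, -⟩ := Function.ne_iff.1 hη0
  let r : Fin m := ⟨m - 1, Nat.sub_one_lt_of_lt i.isLt⟩
  obtain ⟨hunit, hnormal, htangent⟩ := hnW q hqW hA.1
  have hnq := IsUnitConormal.of_tangent h hA hunit hnormal htangent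
  rw [of_dite_eq_updateRow_frameMatrix c η (n q) (r := r) rfl] at hB
  set C : Matrix (Fin m) (Fin m) ℝ := of fun i => if (i : ℕ) < m - 1 then c i else η
  have hCr : C r = η := by ext; simp [C, r]
  have hsign := h.sign_fderiv_lamb_null hnq (hCr ▸ hη) hC hB
  set s := hessianAlong f (n q) q η η
  rw [hCr] at hsign
  rw [hsign] at hshape
  have hs : s ≠ 0 := (hA.hessianAlong_null_eq_zero_iff h hnq hη0 hη).not.2
    (hA.fderiv_lamb_null_ne_zero hη0 hη)
  refine ⟨Real.sign s • n q, hA.isCuspidalConormal_sign_smul h hnq hη0 hη, fun V hV hVT => ?_⟩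
  have hd : fderiv ℝ n q X ⬝ᵥ fderiv ℝ f q (V q) = -(Real.sign s * κ * firstForm f q X (V q)) := by
    have hdot := congrArg (· ⬝ᵥ fderiv ℝ f q (V q)) hshape
    simpa [sub_dotProduct, dotProduct_comm (ν q), h.tangent_normal, firstForm] using hdot
  rw [hessianAlong_smul, hessianAlong_eq_neg_fderiv_dotProduct h hA
    ((hn.contDiffAt (hW.mem_nhds hqW)).of_le (by exact_mod_cast le_top)) hnq
    ((hW.eventually_mem hqW).mono fun x hx hx0 => (hnW x hx hx0).2.2) hV hVT hXT, hd]
  rcases Real.sign_apply_eq_of_ne_zero s hs with hsign | hsign <;> rw [hsign] <;> ring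

lemma gauss_eq_gramDet_hessianAlong (h : IsFrontAt f ν q) (hA : IsA2 f ν q)
    (hK : ∀ᶠ x in 𝓝 q, lamb f ν x ≠ 0 → ∀ X Y : Fin m → ℝ,
      LinearIndependent ℝ ![X, Y] → 0 ≤ Kext f ν x X Y)
    {n : Fin (m + 1) → ℝ} (hn : IsUnitConormal f ν q n) {Xf Yf : (Fin m → ℝ) → (Fin m → ℝ)}
    (hX : DifferentiableAt ℝ Xf q) (hY : DifferentiableAt ℝ Yf q)
    (hXq : fderiv ℝ (lamb f ν) q (Xf q) = 0) (hYq : fderiv ℝ (lamb f ν) q (Yf q) = 0)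
    {aXX aXY aYY : Fin (m + 1) → ℝ}
    (haXX : IsNormalPart f ν q (fderiv ℝ (fun x => fderiv ℝ f x (Xf x)) q (Xf q)) aXX)
    (haXY : IsNormalPart f ν q (fderiv ℝ (fun x => fderiv ℝ f x (Yf x)) q (Xf q)) aXY)
    (haYY : IsNormalPart f ν q (fderiv ℝ (fun x => fderiv ℝ f x (Yf x)) q (Yf q)) aYY) :
    aXX ⬝ᵥ aYY - aXY ⬝ᵥ aXY = gramDet (hessianAlong f n q) (Xf q) (Yf q) := by
  have hII {X Y : Fin m → ℝ} := secondForm_eq_zero_of_tangent h hA hK (X := X) (Y := Y)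
  rw [haXX.eq_hessianAlong_smul h.1 hA hn hX (hII hXq hXq),
    haXY.eq_hessianAlong_smul h.1 hA hn hY (hII hYq hXq),
    haYY.eq_hessianAlong_smul h.1 hA hn hY (hII hYq hYq)]
  simp only [smul_dotProduct, dotProduct_smul, hn.unit, smul_eq_mul, gramDet]
  ring

lemma IsSingPrincCurvVec.hessianAlong_eq (h : IsFrontalAt f ν q) (hA : IsA2 f ν q)
    {N : Fin (m + 1) → ℝ} (hN : IsCuspidalConormal f ν q N) {κ : ℝ} {X : Fin m → ℝ}
    (hX : IsSingPrincCurvVec f ν q κ X) {V : (Fin m → ℝ) → (Fin m → ℝ)}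
    (hV : ContDiffAt ℝ 1 V q)
    (hVT : ∀ᶠ x in 𝓝 q, lamb f ν x = 0 → fderiv ℝ (lamb f ν) x (V x) = 0) :
    hessianAlong f N q X (V q) = κ * firstForm f q X (V q) := by
  obtain ⟨N', hN', hshape⟩ := hX.exists_isCuspidalConormal h hA
  rw [← hA.isCuspidalConormal_unique h hN hN', hshape V hV hVT]

end PrincipalCurvature

lemma IsFrontalAt.of_contDiffOn {m : ℕ} {f ν : (Fin m → ℝ) → (Fin (m + 1) → ℝ)}
    {U : Set (Fin m → ℝ)} (hU : IsOpen U) (hf : ContDiffOn ℝ 2 f U) (hν : ContDiffOn ℝ 2 ν U)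
    (hν1 : ∀ q ∈ U, ν q ⬝ᵥ ν q = 1) (htang : ∀ q ∈ U, ∀ k, pd k f q ⬝ᵥ ν q = 0)
    {q : Fin m → ℝ} (hq : q ∈ U) : IsFrontalAt f ν q where
  contDiffAt_map := hf.contDiffAt (hU.mem_nhds hq)
  contDiffAt_normal := hν.contDiffAt (hU.mem_nhds hq)
  eventually_normal_unit := (hU.eventually_mem hq).mono hν1
  eventually_tangent_normal := by
    filter_upwards [hU.mem_nhds hq] with x hx Z
    rw [pi_eq_sum_univ' Z, map_sum, sum_dotProduct]
    refine Finset.sum_eq_zero fun k _ => ?_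
    rw [map_smul, smul_dotProduct, show fderiv ℝ f x (Pi.single k 1) ⬝ᵥ ν x = 0 from htang x hx k,
      smul_zero]

theorem sectional_curvature_singular_submanifold_general {m : ℕ}
    {f ν : (Fin m → ℝ) → (Fin (m + 1) → ℝ)} {q : Fin m → ℝ} (hF : IsFrontAt f ν q)
    (hA : IsA2 f ν q)
    (hK : ∀ᶠ x in 𝓝 q, lamb f ν x ≠ 0 → ∀ X Y : Fin m → ℝ,
      LinearIndependent ℝ ![X, Y] → 0 ≤ Kext f ν x X Y)
    {Xf Yf : (Fin m → ℝ) → (Fin m → ℝ)} (hX : ContDiffAt ℝ 1 Xf q) (hY : ContDiffAt ℝ 1 Yf q)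
    (hXT : ∀ᶠ x in 𝓝 q, lamb f ν x = 0 → fderiv ℝ (lamb f ν) x (Xf x) = 0)
    (hYT : ∀ᶠ x in 𝓝 q, lamb f ν x = 0 → fderiv ℝ (lamb f ν) x (Yf x) = 0)
    (hXX : firstForm f q (Xf q) (Xf q) = 1) (hYY : firstForm f q (Yf q) (Yf q) = 1)
    (hXY : firstForm f q (Xf q) (Yf q) = 0) {aXX aXY aYY : Fin (m + 1) → ℝ}
    (haXX : IsNormalPart f ν q (fderiv ℝ (fun x => fderiv ℝ f x (Xf x)) q (Xf q)) aXX)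
    (haXY : IsNormalPart f ν q (fderiv ℝ (fun x => fderiv ℝ f x (Yf x)) q (Xf q)) aXY)
    (haYY : IsNormalPart f ν q (fderiv ℝ (fun x => fderiv ℝ f x (Yf x)) q (Yf q)) aYY) :
    0 ≤ aXX ⬝ᵥ aYY - aXY ⬝ᵥ aXY ∧
    (∀ κX κY : ℝ, IsSingPrincCurvVec f ν q κX (Xf q) → IsSingPrincCurvVec f ν q κY (Yf q) →
      aXX ⬝ᵥ aYY - aXY ⬝ᵥ aXY = κX * κY) ∧
    ¬∃ δ > 0, ∀ᶠ x in 𝓝 q, lamb f ν x ≠ 0 → ∀ Z Z' : Fin m → ℝ,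
      LinearIndependent ℝ ![Z, Z'] → δ ≤ Kext f ν x Z Z' := by
  have hXq := hXT.self_of_nhds hA.1
  have hYq := hYT.self_of_nhds hA.1
  have hI : 0 < gramDet (firstForm f q) (Xf q) (Yf q) := by simp [gramDet, hXX, hYY, hXY]
  obtain ⟨N, hN⟩ := hF.exists_isCuspidalConormal hA
  have hgauss := gauss_eq_gramDet_hessianAlong hF hA hK hN.1 (hX.differentiableAt one_ne_zero)
    (hY.differentiableAt one_ne_zero) hXq hYq haXX haXY haYY
  refine ⟨?_, fun κX κY hκX hκY => ?_, not_exists_pos_le_Kext hF hA hK hXq hYq hI⟩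
  · rw [hgauss]
    exact gramDet_hessianAlong_nonneg hF hA hK hN.1 hXq hYq
      (linearIndependent_of_gramDet_firstForm_ne_zero hI.ne')
  · rw [hgauss, gramDet, hκX.hessianAlong_eq hF.1 hA hN hX hXT,
      hκX.hessianAlong_eq hF.1 hA hN hY hYT, hκY.hessianAlong_eq hF.1 hA hN hY hYT, hXX, hYY, hXY]
    ring

/-- For a front `(f, ν)` in `ℝ^{m+1}` (`m ≥ 3`) all of whose singular points are
`A₂`-points and whose extrinsic curvature is positive off the singular set, the sectional
curvature of the singular submanifold at a plane spanned by two `I`-orthonormal singular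
principal directions `X, Y` (computed by the Gauss equation of the immersion `f|_Σ` via
the second fundamental form `α`) equals the product `κ_X κ_Y` of the corresponding
singular principal curvatures and is non-negative; if moreover `K^ext ≥ δ > 0`, it is
strictly positive. -/
theorem sectional_curvature_singular_submanifold {m : ℕ} (hm : 3 ≤ m)
    (U : Set (Fin m → ℝ)) (hU : IsOpen U)
    (f ν : (Fin m → ℝ) → (Fin (m + 1) → ℝ))
    (hf : ContDiffOn ℝ (⊤ : ℕ∞) f U) (hν : ContDiffOn ℝ (⊤ : ℕ∞) ν U)
    (hν1 : ∀ q ∈ U, ν q ⬝ᵥ ν q = 1)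
    (htang : ∀ q ∈ U, ∀ k : Fin m, pd k f q ⬝ᵥ ν q = 0)
    (hfront : ∀ q ∈ U, ∀ X : Fin m → ℝ, fderiv ℝ f q X = 0 → fderiv ℝ ν q X = 0 → X = 0)
    (hallA2 : ∀ q ∈ U, lamb f ν q = 0 → IsA2 f ν q)
    (hpos : ∀ q ∈ U, lamb f ν q ≠ 0 → ∀ X Y : Fin m → ℝ,
      LinearIndependent ℝ ![X, Y] → 0 < Kext f ν q X Y) :
    ∀ q ∈ U, lamb f ν q = 0 →
    ∀ (κX κY : ℝ) (X Y : Fin m → ℝ),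
      IsSingPrincCurvVec f ν q κX X → IsSingPrincCurvVec f ν q κY Y →
      fderiv ℝ f q X ⬝ᵥ fderiv ℝ f q X = 1 →
      fderiv ℝ f q Y ⬝ᵥ fderiv ℝ f q Y = 1 →
      fderiv ℝ f q X ⬝ᵥ fderiv ℝ f q Y = 0 →
      ∀ (Xf Yf : (Fin m → ℝ) → (Fin m → ℝ)) (W : Set (Fin m → ℝ)),
        IsOpen W → q ∈ W → W ⊆ U →
        ContDiffOn ℝ (⊤ : ℕ∞) Xf W → ContDiffOn ℝ (⊤ : ℕ∞) Yf W →
        Xf q = X → Yf q = Y →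
        (∀ x ∈ W, lamb f ν x = 0 →
          fderiv ℝ (lamb f ν) x (Xf x) = 0 ∧ fderiv ℝ (lamb f ν) x (Yf x) = 0) →
        ∀ aXX aXY aYY : Fin (m + 1) → ℝ,
          IsNormalPart f ν q (fderiv ℝ (fun x => fderiv ℝ f x (Xf x)) q X) aXX →
          IsNormalPart f ν q (fderiv ℝ (fun x => fderiv ℝ f x (Yf x)) q X) aXY →
          IsNormalPart f ν q (fderiv ℝ (fun x => fderiv ℝ f x (Yf x)) q Y) aYY →
          (aXX ⬝ᵥ aYY - aXY ⬝ᵥ aXY = κX * κY ∧ 0 ≤ aXX ⬝ᵥ aYY - aXY ⬝ᵥ aXY) ∧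
          ((∃ δ : ℝ, 0 < δ ∧ ∀ x ∈ U, lamb f ν x ≠ 0 → ∀ Z Z' : Fin m → ℝ,
              LinearIndependent ℝ ![Z, Z'] → δ ≤ Kext f ν x Z Z') →
            0 < aXX ⬝ᵥ aYY - aXY ⬝ᵥ aXY) := by
  rintro q hq h0 κX κY _ _ hκX hκY hXX hYY hXY Xf Yf W hW hqW - hXf hYf rfl rfl hT aXX aXY aYY
    haXX haXY haYY
  have hW' : ∀ᶠ x in 𝓝 q, x ∈ W := hW.eventually_mem hqW
  have hF : IsFrontAt f ν q :=
    ⟨.of_contDiffOn hU (mod_cast contDiffOn_infty.1 hf 2) (mod_cast contDiffOn_infty.1 hν 2)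
      hν1 htang hq, hfront q hq⟩
  have hsmooth {V : (Fin m → ℝ) → (Fin m → ℝ)} (hV : ContDiffOn ℝ (⊤ : ℕ∞) V W) :
      ContDiffAt ℝ 1 V q := (hV.contDiffAt (hW.mem_nhds hqW)).of_le (by exact_mod_cast le_top)
  obtain ⟨hnonneg, hprod, hδ⟩ := sectional_curvature_singular_submanifold_general hF
    (hallA2 q hq h0)
    ((hU.eventually_mem hq).mono fun x hx hx0 X Y hXY => (hpos x hx hx0 X Y hXY).le)
    (hsmooth hXf) (hsmooth hYf) (hW'.mono fun x hx hx0 => (hT x hx hx0).1)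
    (hW'.mono fun x hx hx0 => (hT x hx hx0).2) hXX hYY hXY haXX haXY haYY
  exact ⟨⟨hprod κX κY hκX hκY, hnonneg⟩, fun ⟨δ, hδ0, hKδ⟩ =>
    (hδ ⟨δ, hδ0, (hU.eventually_mem hq).mono hKδ⟩).elim⟩
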